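/- Let (Ω, Σ, ℙ) be a probability space, K ⊆ ℝ^m, f : K → ℝ^n, and X : Ω → K a random variable such that X and f∘X are both integrable. Then the pair of means (𝔼[X], 𝔼[f(X)]) lies in the convex hull CH(G(f)) of the graph of f. -/

import Mathlib

open MeasureTheory

/-- A convex set avoiding the mean of a random vector with values in it admits a nonzero linear
functional whose maximum over the set together with the mean is attained at the mean. -/
theorem Convex.exists_ne_zero_forall_le_apply_integral {Ω E : Type*} [MeasurableSpace Ω]
    {μ : Measure Ω} [IsProbabilityMeasure μ] [NormedAddCommGroup E] [NormedSpace ℝ E]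
    [FiniteDimensional ℝ E] {C : Set E} (hC : Convex ℝ C) {Z : Ω → E} (hZ : Integrable Z μ)
    (hZC : ∀ᵐ ω ∂μ, Z ω ∈ C) (hmem : ∫ ω, Z ω ∂μ ∉ C) :
    ∃ φ : E →L[ℝ] ℝ, φ ≠ 0 ∧ ∀ x ∈ C, φ x ≤ φ (∫ ω, Z ω ∂μ) := by
  obtain ⟨ω₀, hω₀⟩ := hZC.exists
  by_cases hint : (interior C).Nonempty
  · exact geometric_hahn_banach_of_nonempty_interior_point hC
      (fun h => hmem (interior_subset h)) hint
  · have hspan : affineSpan ℝ C ≠ ⊤ := fun h =>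
      hint (hC.interior_nonempty_iff_affineSpan_eq_top.2 h)
    have hdir : (affineSpan ℝ C).direction < ⊤ := by
      rw [lt_top_iff_ne_top]
      intro h
      exact hspan ((AffineSubspace.direction_eq_top_iff_of_nonempty
        ⟨Z ω₀, subset_affineSpan ℝ C hω₀⟩).1 h)
    obtain ⟨ψ, hψ, hker⟩ := Submodule.exists_le_ker_of_lt_top _ hdir
    have hconst : ∀ x ∈ C, ψ x = ψ (Z ω₀) := fun x hx => by
      have h := hker (AffineSubspace.vsub_mem_direction (subset_affineSpan ℝ C hx)
        (subset_affineSpan ℝ C hω₀))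
      simpa [sub_eq_zero] using h
    have hmean : ψ.toContinuousLinearMap (∫ ω, Z ω ∂μ) = ψ (Z ω₀) := by
      rw [← ContinuousLinearMap.integral_comp_comm _ hZ,
        integral_congr_ae (f := fun ω => ψ.toContinuousLinearMap (Z ω)) (g := fun _ => ψ (Z ω₀))
          (hZC.mono fun ω hω => hconst _ hω)]
      simp
    refine ⟨ψ.toContinuousLinearMap, fun h => hψ ?_, fun x hx => ?_⟩
    · ext x
      exact DFunLike.congr_fun h x
    · rw [hmean]
      exact (hconst x hx).le

/-- In finite dimension, the mean of a random vector with values in a convex set lies in that set,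
whether or not the set is closed. -/
theorem Convex.integral_mem_of_finiteDimensional {Ω E : Type*} [MeasurableSpace Ω]
    {μ : Measure Ω} [IsProbabilityMeasure μ] [NormedAddCommGroup E] [NormedSpace ℝ E]
    [FiniteDimensional ℝ E] {C : Set E} (hC : Convex ℝ C) {Z : Ω → E} (hZ : Integrable Z μ)
    (hZC : ∀ᵐ ω ∂μ, Z ω ∈ C) : ∫ ω, Z ω ∂μ ∈ C := by
  induction hd : Module.finrank ℝ E using Nat.strong_induction_on generalizing E with
  | _ d ih =>
    by_contra hmem
    obtain ⟨φ, hφ, hle⟩ := hC.exists_ne_zero_forall_le_apply_integral hZ hZC hmem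
    set z := ∫ ω, Z ω ∂μ with hz
    have hnonneg : 0 ≤ᵐ[μ] fun ω => φ z - φ (Z ω) :=
      hZC.mono fun ω hω => sub_nonneg.2 (hle _ hω)
    have hφZ : Integrable (fun ω => φ (Z ω)) μ := φ.integrable_comp hZ
    have hzero : ∫ ω, (φ z - φ (Z ω)) ∂μ = 0 := by
      rw [integral_sub (integrable_const _) hφZ, φ.integral_comp_comm hZ]
      simp [← hz]
    have hker : ∀ᵐ ω ∂μ, Z ω - z ∈ φ.ker := by
      filter_upwards [(integral_eq_zero_iff_of_nonneg_ae hnonneg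
        ((integrable_const _).sub hφZ)).1 hzero] with ω hω
      have hω' : φ z - φ (Z ω) = 0 := hω
      rw [LinearMap.mem_ker, ContinuousLinearMap.coe_coe, map_sub]
      linarith
    have hlt : Module.finrank ℝ φ.ker < d := by
      rw [← hd]
      refine Submodule.finrank_lt fun h => hφ ?_
      ext x
      have hx : x ∈ φ.ker := h ▸ Submodule.mem_top
      exact hx
    obtain ⟨P, hP⟩ := φ.ker_closedComplemented_of_finiteDimensional_range
    have hsub : Integrable (fun ω => Z ω - z) μ := hZ.sub (integrable_const _)
    have hmean : ∫ ω, P (Z ω - z) ∂μ = 0 := by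
      rw [P.integral_comp_comm hsub, integral_sub hZ (integrable_const _)]
      simp [← hz]
    have hconv : Convex ℝ {v : φ.ker | z + (v : E) ∈ C} :=
      (hC.translate_preimage_right z).linear_preimage φ.ker.subtype
    have h0 := ih _ hlt hconv (P.integrable_comp hsub) (by
      filter_upwards [hker, hZC] with ω hω hωC
      have h : P (Z ω - z) = ⟨Z ω - z, hω⟩ := hP ⟨Z ω - z, hω⟩
      simpa [h] using hωC) rfl
    rw [hmean] at h0
    exact hmem (by simpa using h0)

/-- finite-dimensional case: `(𝔼[X], 𝔼[f(X)])` lies in the convex hull of the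
graph of `f`. -/
theorem stmt_4 {Ω : Type*} [MeasurableSpace Ω] (ℙ : Measure Ω) [IsProbabilityMeasure ℙ]
    (m n : ℕ) (K : Set (Fin m → ℝ)) (f : (Fin m → ℝ) → (Fin n → ℝ))
    (X : Ω → Fin m → ℝ) (hXK : ∀ ω, X ω ∈ K)
    (hXint : Integrable X ℙ) (hfXint : Integrable (fun ω => f (X ω)) ℙ) :
    (∫ ω, X ω ∂ℙ, ∫ ω, f (X ω) ∂ℙ) ∈ convexHull ℝ ((fun x => (x, f x)) '' K) := by
  rw [← integral_pair hXint hfXint]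
  exact (convex_convexHull ℝ _).integral_mem_of_finiteDimensional (hXint.prodMk hfXint)
    (Filter.Eventually.of_forall fun ω => subset_convexHull ℝ _ ⟨X ω, hXK ω, rfl⟩)
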